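/- arXiv:1511.02202 — 2 statements merged into one kernel-verified Lean document; each statement's English description precedes it below -/
import Mathlib

section
/- Let S be a Haydon space and let (μₙ), (νₙ) be sequences of nonnegative monotone additive functions on the topology of S with μₙ(S) = νₙ(S) = 1 for all n, such that μₘ and νₙ are 𝒰(S)-separated for all m, n (for each ε > 0 a clopen set A exists with μₘ(A) < ε and νₙ(S∖A) < ε). Then there is an infinite set Λ ⊆ ℕ such that for each ε > 0 there exists a single clopen set A with μₘ(A) < ε and νₙ(S∖A) < ε for all m, n ∈ Λ. -/
/-- A nonnegative finitely additive function on the algebra of clopen sets. -/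
structure IsClopenContent {S : Type*} [TopologicalSpace S] (p : Set S → ℝ) : Prop where
  nonneg : ∀ A, IsClopen A → 0 ≤ p A
  union : ∀ A B, IsClopen A → IsClopen B → Disjoint A B → p (A ∪ B) = p A + p B

namespace IsClopenContent

variable {S : Type*} [TopologicalSpace S] {p q : Set S → ℝ}

lemma diff_add (hp : IsClopenContent p) {A B : Set S} (hA : IsClopen A) (hB : IsClopen B)
    (h : A ⊆ B) : p (B \ A) + p A = p B := by
  rw [← hp.union _ _ (hB.diff hA) hA Set.disjoint_sdiff_left, Set.sdiff_union_of_subset h]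

lemma mono (hp : IsClopenContent p) {A B : Set S} (hA : IsClopen A) (hB : IsClopen B)
    (h : A ⊆ B) : p A ≤ p B := by
  have h1 := hp.diff_add hA hB h
  have h2 := hp.nonneg _ (hB.diff hA)
  linarith

lemma union_le (hp : IsClopenContent p) {A B : Set S} (hA : IsClopen A) (hB : IsClopen B) :
    p (A ∪ B) ≤ p A + p B := by
  have h1 := hp.union _ _ hA (hB.diff hA) Set.disjoint_sdiff_right
  rw [Set.union_sdiff_self] at h1
  have h2 := hp.mono (hB.diff hA) hB Set.sdiff_subset
  linarith

lemma le_diff_add (hp : IsClopenContent p) {A B : Set S} (hA : IsClopen A) (hB : IsClopen B) :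
    p B ≤ p (B \ A) + p A := by
  have h1 := hp.union_le (hB.diff hA) hA
  rw [Set.sdiff_union_self] at h1
  exact (hp.mono hB (hB.union hA) Set.subset_union_left).trans h1

lemma empty (hp : IsClopenContent p) : p ∅ = 0 := by
  have h := hp.union ∅ ∅ isClopen_empty isClopen_empty (by simp)
  rw [Set.union_empty] at h
  linarith

lemma add (hp : IsClopenContent p) (hq : IsClopenContent q) :
    IsClopenContent (fun A => p A + q A) where
  nonneg A hA := add_nonneg (hp.nonneg A hA) (hq.nonneg A hA)
  union A B hA hB h := by
    simp only [hp.union A B hA hB h, hq.union A B hA hB h]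
    ring

lemma sum {ι : Type*} (F : Finset ι) {p : ι → Set S → ℝ} (hp : ∀ i, IsClopenContent (p i)) :
    IsClopenContent (fun A => ∑ i ∈ F, p i A) where
  nonneg A hA := Finset.sum_nonneg fun i _ => (hp i).nonneg A hA
  union A B hA hB h := by
    rw [← Finset.sum_add_distrib]
    exact Finset.sum_congr rfl fun i _ => (hp i).union A B hA hB h

lemma single_le_sum {ι : Type*} {F : Finset ι} {p : ι → Set S → ℝ}
    (hp : ∀ i, IsClopenContent (p i)) {i : ι} (hi : i ∈ F) {A : Set S} (hA : IsClopen A) :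
    p i A ≤ ∑ j ∈ F, p j A :=
  Finset.single_le_sum (f := fun j => p j A) (fun j _ => (hp j).nonneg A hA) hi

lemma sum_le_of_pairwise_disjoint {ι : Type*} (hp : IsClopenContent p) (F : Finset ι)
    {H : ι → Set S} (hH : ∀ i, IsClopen (H i)) (hd : Pairwise (Function.onFun Disjoint H)) :
    ∑ i ∈ F, p (H i) ≤ p Set.univ := by
  classical
  have key : ∑ i ∈ F, p (H i) = p (⋃ i ∈ F, H i) := by
    induction F using Finset.induction_on with
    | empty => simp [hp.empty]
    | insert a F ha ih =>
      rw [Finset.sum_insert ha, ih, Finset.set_biUnion_insert,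
        hp.union _ _ (hH a) (isClopen_biUnion_finset fun i _ => hH i)]
      refine Set.disjoint_iUnion₂_right.2 fun i hi => hd ?_
      rintro rfl
      exact ha hi
  rw [key]
  exact hp.mono (isClopen_biUnion_finset fun i _ => hH i) isClopen_univ
    (Set.subset_univ _)

end IsClopenContent

/-- Two set functions are separated if clopen sets carry almost none of the first and almost all
of the second. -/
def ClopenSeparated {S : Type*} [TopologicalSpace S] (p q : Set S → ℝ) : Prop :=
  ∀ ε > (0 : ℝ), ∃ A : Set S, IsClopen A ∧ p A < ε ∧ q Aᶜ < ε

namespace ClopenSeparated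

variable {S : Type*} [TopologicalSpace S] {p q r : Set S → ℝ}

lemma symm (h : ClopenSeparated p q) : ClopenSeparated q p := fun ε hε => by
  obtain ⟨A, hA, h1, h2⟩ := h ε hε
  exact ⟨Aᶜ, hA.compl, h2, by rwa [compl_compl]⟩

lemma add_left (hp : IsClopenContent p) (hq : IsClopenContent q) (hr : IsClopenContent r)
    (h1 : ClopenSeparated p r) (h2 : ClopenSeparated q r) :
    ClopenSeparated (fun A => p A + q A) r := fun ε hε => by
  obtain ⟨A, hA, hpA, hrA⟩ := h1 (ε / 2) (by positivity)
  obtain ⟨B, hB, hqB, hrB⟩ := h2 (ε / 2) (by positivity)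
  refine ⟨A ∩ B, hA.inter hB, ?_, ?_⟩
  · have h3 := hp.mono (hA.inter hB) hA Set.inter_subset_left
    have h4 := hq.mono (hA.inter hB) hB Set.inter_subset_right
    simp only
    linarith
  · rw [Set.compl_inter]
    have := hr.union_le hA.compl hB.compl
    linarith

lemma sum_left {ι : Type*} (F : Finset ι) {p : ι → Set S → ℝ}
    (hp : ∀ i, IsClopenContent (p i)) (hr : IsClopenContent r)
    (h : ∀ i, ClopenSeparated (p i) r) : ClopenSeparated (fun A => ∑ i ∈ F, p i A) r := by
  classical
  induction F using Finset.induction_on with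
  | empty => exact fun ε hε => ⟨Set.univ, isClopen_univ, by simpa, by simpa [hr.empty]⟩
  | insert a F ha ih =>
    simp only [Finset.sum_insert ha]
    exact add_left (hp a) (.sum F hp) hr (h a) ih

lemma sum_sum {ι κ : Type*} (F : Finset ι) (G : Finset κ) {p : ι → Set S → ℝ}
    {q : κ → Set S → ℝ} (hp : ∀ i, IsClopenContent (p i)) (hq : ∀ j, IsClopenContent (q j))
    (h : ∀ i j, ClopenSeparated (p i) (q j)) :
    ClopenSeparated (fun A => ∑ i ∈ F, p i A) (fun A => ∑ j ∈ G, q j A) :=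
  sum_left F hp (.sum G hq) fun i => (sum_left G hq (hp i) fun j => (h i j).symm).symm

end ClopenSeparated

section Splitting

variable {S : Type*} [TopologicalSpace S]

/-- If the contents `l n`, `n ∈ L`, put mass at least `s` on sets that are arbitrarily small for
finitely many of them, then such a set can be found which in addition is nearly null for infinitely
many `l k`. -/
lemma exists_small_set_of_concentration {l : ℕ → Set S → ℝ} (hl : ∀ n, IsClopenContent (l n))
    {c : ℝ} (hc : ∀ n, l n Set.univ ≤ c) {L : Set ℕ} (hL : L.Infinite) {s e γ : ℝ}
    (he : 0 < e) (hγ : 0 < γ)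
    (hbig : ∀ K : ℕ, ∀ δ > (0 : ℝ), ∃ n ∈ L, ∃ C, IsClopen C ∧
      ∑ i ∈ Finset.range K, l i C < δ ∧ s ≤ l n C)
    {R : Set S} (hR : IsClopen R) (hRe : ∀ n ∈ L, l n R ≤ e)
    (K₀ : ℕ) {δ₀ : ℝ} (hδ₀ : 0 < δ₀) :
    ∃ n ∈ L, ∃ U, IsClopen U ∧ Disjoint R U ∧ ∑ i ∈ Finset.range K₀, l i U < δ₀ ∧
      s - 2 * e ≤ l n U ∧ {k | k ∈ L ∧ l k U < γ}.Infinite := by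
  by_contra hcon
  push Not at hcon
  have claim : ∀ N : ℕ, ∀ K : ℕ, ∀ δ > (0 : ℝ), ∃ D, IsClopen D ∧
      ∑ i ∈ Finset.range K, l i D < δ ∧ {k | k ∈ L ∧ l k D < N * γ}.Finite := by
    intro N
    induction N with
    | zero =>
      intro K δ hδ
      refine ⟨∅, isClopen_empty, by simpa [(hl _).empty], ?_⟩
      simp [(hl _).empty]
    | succ N ih =>
      intro K δ hδ
      obtain ⟨n, hn, C, hC, hCs, hCn⟩ := hbig (max K K₀) (min (δ / 2) δ₀) (by positivity)
      obtain ⟨D, hD, hDs, hDf⟩ := ih (max K (n + 1)) (min (δ / 2) e) (by positivity)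
      have hsum : ∀ {a b : ℕ}, a ≤ b → ∀ {X : Set S}, IsClopen X →
          ∑ i ∈ Finset.range a, l i X ≤ ∑ i ∈ Finset.range b, l i X := fun hab X hX =>
        Finset.sum_le_sum_of_subset_of_nonneg (by simpa using hab)
          fun i _ _ => (hl i).nonneg X hX
      have hUc : IsClopen ((C \ R) \ D) := (hC.diff hR).diff hD
      have hDn : l n D < e :=
        ((IsClopenContent.single_le_sum hl (F := Finset.range (max K (n + 1)))
          (by simp) hD).trans_lt hDs).trans_le (min_le_right _ _)
      have h1 := (hl n).le_diff_add hR hC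
      have h2 := (hl n).le_diff_add hD (hC.diff hR)
      have h3 := hRe n hn
      have hfin := hcon n hn _ hUc
        (Set.disjoint_left.2 fun x hx h => h.1.2 hx)
        (((hsum (le_max_right K K₀) hUc).trans ((IsClopenContent.sum _ hl).mono hUc hC
          fun x hx => hx.1.1)).trans_lt (hCs.trans_le (min_le_right _ _))) (by linarith)
      refine ⟨D ∪ (C \ R) \ D, hD.union hUc, ?_, (hfin.union hDf).subset ?_⟩
      · have h4 := (IsClopenContent.sum (Finset.range K) hl).union_le hD hUc
        have h5 := (IsClopenContent.sum (Finset.range K) hl).mono hUc hC fun x hx => hx.1.1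
        have h6 := (hsum (le_max_left K K₀) hC).trans_lt (hCs.trans_le (min_le_left _ _))
        have h7 := (hsum (le_max_left K (n + 1)) hD).trans_lt (hDs.trans_le (min_le_left _ _))
        linarith
      · rintro k ⟨hk, hlt⟩
        rw [(hl k).union _ _ hD hUc Set.disjoint_sdiff_right] at hlt
        push_cast at hlt
        by_contra h
        simp only [Set.mem_union, Set.mem_ofPred_eq, not_or, not_and, not_lt] at h
        have h8 := h.1 hk
        have h9 := h.2 hk
        linarith
  obtain ⟨N, hN⟩ := exists_nat_gt (c / γ)
  obtain ⟨D, hD, -, hDf⟩ := claim N 0 1 one_pos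
  refine hL (hDf.subset fun k hk => ⟨hk, ?_⟩)
  exact (((hl k).mono hD isClopen_univ (Set.subset_univ _)).trans (hc k)).trans_lt
    ((div_lt_iff₀ hγ).1 hN)

/-- Subsequence splitting: along a subsequence, a bounded sequence of contents is uniformly
absolutely continuous, up to `e`, off pairwise disjoint clopen sets. -/
lemma exists_subsequence_splitting {l : ℕ → Set S → ℝ} (hl : ∀ n, IsClopenContent (l n))
    {c : ℝ} (hc : ∀ n, l n Set.univ ≤ c) {e : ℝ} (he : 0 < e) :
    ∃ (K : ℕ) (δ : ℝ) (f : ℕ → ℕ) (U : ℕ → Set S), 0 < δ ∧ StrictMono f ∧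
      (∀ k, IsClopen (U k)) ∧ Pairwise (Function.onFun Disjoint U) ∧
      ∀ k C, IsClopen C → ∑ i ∈ Finset.range K, l i C < δ → l (f k) (C \ U k) < e := by
  set d := e / 4 with hd
  have hd0 : 0 < d := by positivity
  let T : Set ℝ := {t | ∃ L : Set ℕ, L.Infinite ∧ ∃ K : ℕ, ∃ δ > (0 : ℝ), ∀ n ∈ L, ∀ C,
    IsClopen C → ∑ i ∈ Finset.range K, l i C < δ → l n C < t}
  have hT0 : BddBelow T := by
    refine ⟨0, ?_⟩
    rintro t ⟨L, hL, K, δ, hδ, h⟩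
    obtain ⟨n, hn⟩ := hL.nonempty
    have := h n hn ∅ isClopen_empty (by simpa [(hl _).empty])
    rw [(hl n).empty] at this
    exact this.le
  have hTne : T.Nonempty := ⟨c + 1, Set.univ, Set.infinite_univ, 0, 1, one_pos, fun n _ C hC _ =>
    (((hl n).mono hC isClopen_univ (Set.subset_univ _)).trans (hc n)).trans_lt (lt_add_one c)⟩
  obtain ⟨t, ⟨L, hL, K, δ, hδ, ht⟩, htlt⟩ := exists_lt_of_csInf_lt hTne (lt_add_of_pos_right _ hd0)
  have hbig : ∀ L' ⊆ L, L'.Infinite → ∀ K' : ℕ, ∀ δ' > (0 : ℝ), ∃ n ∈ L', ∃ C, IsClopen C ∧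
      ∑ i ∈ Finset.range K', l i C < δ' ∧ t - 2 * d ≤ l n C := by
    intro L' _ hL' K' δ' hδ'
    by_contra hcon
    push Not at hcon
    have := csInf_le hT0 (show t - 2 * d ∈ T from ⟨L', hL', K', δ', hδ', hcon⟩)
    linarith
  let Good : Set ℕ × Set S → Prop := fun P => P.1 ⊆ L ∧ P.1.Infinite ∧ IsClopen P.2 ∧
    ∃ r < d, ∀ n ∈ P.1, l n P.2 ≤ r
  have step : ∀ P : {P // Good P}, ∃ (n : ℕ) (U : Set S) (Q : {P // Good P}),
      n ∈ P.1.1 ∧ IsClopen U ∧ Disjoint P.1.2 U ∧ ∑ i ∈ Finset.range K, l i U < δ / 2 ∧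
      t - 4 * d ≤ l n U ∧ Q.1.1 ⊆ P.1.1 ∧ (∀ k ∈ Q.1.1, n < k) ∧ Q.1.2 = P.1.2 ∪ U := by
    rintro ⟨⟨L', R⟩, hL', hinf, hR, r, hr, hrR⟩
    simp only at hL' hinf hR hrR ⊢
    obtain ⟨n, hn, U, hU, hdisj, hUs, hUn, hUinf⟩ :=
      exists_small_set_of_concentration hl hc hinf hd0 (show 0 < (d - r) / 2 by linarith)
        (hbig L' hL' hinf) hR (fun n hn => (hrR n hn).trans hr.le) K (half_pos hδ)
    refine ⟨n, U, ⟨⟨{k | k ∈ L' ∧ l k U < (d - r) / 2} \ Set.Iic n, R ∪ U⟩,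
      fun k hk => hL' hk.1.1, hUinf.sdiff (Set.finite_Iic n), hR.union hU, (d + r) / 2,
      by linarith, ?_⟩, hn, hU, hdisj, hUs, by linarith, fun k hk => hk.1.1,
      fun k hk => not_le.1 hk.2, rfl⟩
    rintro k ⟨⟨hk, hkU⟩, -⟩
    have h1 := (hl k).union_le hR hU
    have h2 := hrR k hk
    simp only
    linarith
  choose n U Q hn hU hdisj hUs hUn _ hQn hQR using step
  let P : ℕ → {P // Good P} := fun k => Nat.rec
    ⟨⟨L, ∅⟩, subset_rfl, hL, isClopen_empty, 0, hd0, fun n _ => (hl n).empty.le⟩ (fun _ => Q) k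
  have hPs : ∀ k, P (k + 1) = Q (P k) := fun k => rfl
  have hRmono : Monotone fun k => (P k).1.2 := monotone_nat_of_le_succ fun k => by
    rw [hPs, hQR]
    exact Set.subset_union_left
  have hdis : ∀ i j, i < j → Disjoint (U (P i)) (U (P j)) := fun i j hij =>
    (hdisj (P j)).mono_left <| le_trans
      ((hQR (P i)).symm ▸ Set.subset_union_right : U (P i) ⊆ (P (i + 1)).1.2)
      (hRmono (Nat.succ_le_of_lt hij))
  refine ⟨K, δ / 2, fun k => n (P k), fun k => U (P k), half_pos hδ,
    strictMono_nat_of_lt_succ fun k => hQn (P k) _ (hn (P (k + 1))), fun k => hU _, ?_, ?_⟩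
  · intro i j hij
    rcases hij.lt_or_gt with h | h
    · exact hdis i j h
    · exact (hdis j i h).symm
  · intro k C hC hCs
    have hUk := hU (P k)
    have h1 := ht (n (P k)) ((P k).2.1 (hn (P k))) (C ∪ U (P k)) (hC.union hUk)
      (lt_of_le_of_lt ((IsClopenContent.sum (Finset.range K) hl).union_le hC hUk)
        (by linarith [hUs (P k)]))
    have h2 := (hl (n (P k))).diff_add hUk (hC.union hUk) Set.subset_union_right
    rw [Set.union_sdiff_right] at h2
    have h3 := hUn (P k)
    linarith

end Splitting

/-- The subsequential completeness property of the algebra of clopen sets. -/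
def ClopenSubseqComplete (S : Type*) [TopologicalSpace S] : Prop :=
  ∀ U : ℕ → Set S, (∀ n, IsClopen (U n)) → Pairwise (Function.onFun Disjoint U) →
    ∃ M : Set ℕ, M.Infinite ∧ IsOpen (closure (⋃ m ∈ M, U m))

namespace ClopenSubseqComplete

variable {S : Type*} [TopologicalSpace S]

lemma exists_strictMono (hS : ClopenSubseqComplete S) {U : ℕ → Set S}
    (hU : ∀ n, IsClopen (U n)) (hd : Pairwise (Function.onFun Disjoint U)) :
    ∃ f : ℕ → ℕ, StrictMono f ∧ IsClopen (closure (⋃ k, U (f k))) := by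
  obtain ⟨M, hM, hopen⟩ := hS U hU hd
  refine ⟨Nat.nth (· ∈ M), Nat.nth_strictMono hM, isClosed_closure, ?_⟩
  have : ⋃ k, U (Nat.nth (· ∈ M) k) = ⋃ m ∈ M, U m := by
    rw [← Set.biUnion_range (f := Nat.nth (· ∈ M)) (g := U), Nat.range_nth_of_infinite (p := (· ∈ M)) hM]
    rfl
  rwa [this]

/-- The subsequence in the completeness property may be chosen with small union. -/
lemma exists_strictMono_small (hS : ClopenSubseqComplete S) {U : ℕ → Set S}
    (hU : ∀ n, IsClopen (U n)) (hd : Pairwise (Function.onFun Disjoint U))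
    {p : Set S → ℝ} (hp : IsClopenContent p) {δ : ℝ} (hδ : 0 < δ) :
    ∃ f : ℕ → ℕ, StrictMono f ∧ IsClopen (closure (⋃ k, U (f k))) ∧
      p (closure (⋃ k, U (f k))) < δ := by
  obtain ⟨N, hN⟩ := exists_nat_gt (p Set.univ / δ)
  have hg : ∀ i : Fin N, StrictMono fun k : ℕ => N * k + i := fun i =>
    (strictMono_mul_left_of_pos i.pos).add_const _
  have hex := fun i : Fin N => hS.exists_strictMono (U := fun k => U (N * k + i))
    (fun k => hU _) fun a b hab => hd ((hg i).injective.ne hab)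
  choose f hf hcl using hex
  by_contra hcon
  push Not at hcon
  have hdis : Pairwise (Function.onFun Disjoint fun i => closure (⋃ k, U (N * f i k + i))) := by
    intro i j hij
    refine Disjoint.closure_left (Disjoint.closure_right ?_ ?_) (hcl j).isOpen
    · refine Set.disjoint_iUnion_left.2 fun a => Set.disjoint_iUnion_right.2 fun b => hd fun h => hij (Fin.ext ?_)
      have := congrArg (· % N) h
      simpa [Nat.mod_eq_of_lt i.2, Nat.mod_eq_of_lt j.2] using this
    · exact isOpen_iUnion fun k => (hU _).isOpen
  have h1 := hp.sum_le_of_pairwise_disjoint Finset.univ hcl hdis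
  have h2 : ∑ _i : Fin N, δ ≤ ∑ i : Fin N, p (closure (⋃ k, U (N * f i k + i))) :=
    Finset.sum_le_sum fun i _ => hcon _ ((hg i).comp (hf i)) (hcl i)
  rw [Finset.sum_const, Finset.card_univ, Fintype.card_fin, nsmul_eq_mul] at h2
  have := (div_lt_iff₀ hδ).1 hN
  linarith

/-- Separation of a subsequence with a prescribed accuracy. -/
lemma exists_subsequence_separated (hS : ClopenSubseqComplete S) {μ ν : ℕ → Set S → ℝ}
    (hμ : ∀ n, IsClopenContent (μ n)) (hν : ∀ n, IsClopenContent (ν n)) {c : ℝ}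
    (hμc : ∀ n, μ n Set.univ ≤ c) (hνc : ∀ n, ν n Set.univ ≤ c)
    (hsep : ∀ m n, ClopenSeparated (μ m) (ν n)) {ε : ℝ} (hε : 0 < ε) :
    ∃ f : ℕ → ℕ, StrictMono f ∧ ∃ A, IsClopen A ∧ ∀ k, μ (f k) A < ε ∧ ν (f k) Aᶜ < ε := by
  obtain ⟨K, δ, f, U, hδ, hf, hU, hUd, hsplit⟩ := exists_subsequence_splitting
    (l := fun n A => μ n A + ν n A) (fun n => (hμ n).add (hν n)) (c := c + c)
    (fun n => add_le_add (hμc n) (hνc n)) (show 0 < ε / 3 by positivity)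
  have hσ := IsClopenContent.sum (Finset.range K) fun n => (hμ n).add (hν n)
  have hsplitμ : ∀ k C, IsClopen C → ∑ i ∈ Finset.range K, (μ i C + ν i C) < δ →
      μ (f k) (C \ U k) < ε / 3 := fun k C hC h => by
    have h1 := hsplit k C hC h
    have h2 := (hν (f k)).nonneg _ (hC.diff (hU k))
    linarith
  have hsplitν : ∀ k C, IsClopen C → ∑ i ∈ Finset.range K, (μ i C + ν i C) < δ →
      ν (f k) (C \ U k) < ε / 3 := fun k C hC h => by
    have h1 := hsplit k C hC h
    have h2 := (hμ (f k)).nonneg _ (hC.diff (hU k))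
    linarith
  have hBex : ∀ n : ℕ, ∃ B, IsClopen B ∧
      ∑ i ∈ Finset.range (K + n + 1), μ i B < min (ε / 3) (δ / 4) ∧
      ∑ i ∈ Finset.range (K + n + 1), ν i Bᶜ < min (ε / 3) (δ / 4) := fun n =>
    ClopenSeparated.sum_sum _ _ hμ hν hsep _ (by positivity)
  choose B hB hBμ hBν using hBex
  have hBμn : ∀ n, μ n (B n) < ε / 3 := fun n =>
    ((IsClopenContent.single_le_sum hμ (F := Finset.range (K + n + 1)) (by simp) (hB n)).trans_lt
      (hBμ n)).trans_le (min_le_left _ _)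
  have hBνn : ∀ n, ν n (B n)ᶜ < ε / 3 := fun n =>
    ((IsClopenContent.single_le_sum hν (F := Finset.range (K + n + 1)) (by simp)
      (hB n).compl).trans_lt (hBν n)).trans_le (min_le_left _ _)
  have hdiff : ∀ m n, ∑ i ∈ Finset.range K, (μ i (B m \ B n) + ν i (B m \ B n)) < δ := by
    intro m n
    rw [Finset.sum_add_distrib]
    have hsub : ∀ n, Finset.range K ⊆ Finset.range (K + n + 1) := fun n => by
      simp only [Finset.range_subset_range]; omega
    have h1 := (IsClopenContent.sum (Finset.range K) hμ).mono ((hB m).diff (hB n)) (hB m)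
      Set.sdiff_subset
    have h2 := (IsClopenContent.sum (Finset.range K) hν).mono ((hB m).diff (hB n)) (hB n).compl
      fun x hx => hx.2
    have h3 := (Finset.sum_le_sum_of_subset_of_nonneg (hsub m)
      fun i _ _ => (hμ i).nonneg _ (hB m)).trans_lt ((hBμ m).trans_le (min_le_right _ _))
    have h4 := (Finset.sum_le_sum_of_subset_of_nonneg (hsub n)
      fun i _ _ => (hν i).nonneg _ (hB n).compl).trans_lt ((hBν n).trans_le (min_le_right _ _))
    linarith
  obtain ⟨g, hg, hHc, hHs⟩ := hS.exists_strictMono_small (U := fun k => U k ∩ B (f k))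
    (fun k => (hU k).inter (hB _))
    (fun i j hij => (hUd hij).mono Set.inter_subset_left Set.inter_subset_left) hσ hδ
  obtain ⟨h, hh, hGc, hGs⟩ := hS.exists_strictMono_small (U := fun k => U (g k) \ B (f (g k)))
    (fun k => (hU _).diff (hB _))
    (fun i j hij => (hUd (hg.injective.ne hij)).mono Set.sdiff_subset Set.sdiff_subset) hσ hδ
  set H := closure (⋃ k, U (g k) ∩ B (f (g k)))
  set G := closure (⋃ k, U (g (h k)) \ B (f (g (h k))))
  have hA : IsClopen ((B 0 ∪ H) \ G) := ((hB 0).union hHc).diff hGc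
  refine ⟨fun k => f (g (h k)), hf.comp (hg.comp hh), (B 0 ∪ H) \ G, hA, fun k => ?_⟩
  set j := g (h k)
  have hHsub : U j ∩ B (f j) ⊆ H :=
    (Set.subset_iUnion (fun k => U (g k) ∩ B (f (g k))) (h k)).trans subset_closure
  have hGsub : U j \ B (f j) ⊆ G :=
    (Set.subset_iUnion (fun k => U (g (h k)) \ B (f (g (h k)))) k).trans subset_closure
  have hGdisj : Disjoint G (U j ∩ B (f j)) := by
    refine Disjoint.closure_left (Set.disjoint_iUnion_left.2 fun i => ?_)
      ((hU j).inter (hB _)).isOpen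
    by_cases hij : g (h i) = j
    · rw [hij]
      exact Set.disjoint_left.2 fun x hx hx' => hx.2 hx'.2
    · exact (hUd hij).mono Set.sdiff_subset Set.inter_subset_left
  constructor
  · have hsub : (B 0 ∪ H) \ G ⊆ (B (f j) ∪ ((B 0 \ B (f j)) \ U j)) ∪ (H \ U j) := by
      rintro x ⟨hx, hxG⟩
      by_cases hxU : x ∈ U j
      · by_cases hxB : x ∈ B (f j)
        · exact .inl (.inl hxB)
        · exact absurd (hGsub ⟨hxU, hxB⟩) hxG
      · simp only [Set.mem_union, Set.mem_sdiff] at hx ⊢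
        tauto
    have c1 : IsClopen ((B 0 \ B (f j)) \ U j) := ((hB 0).diff (hB _)).diff (hU j)
    have c2 : IsClopen (H \ U j) := hHc.diff (hU j)
    have h1 := (hμ (f j)).mono hA (((hB _).union c1).union c2) hsub
    have h2 := (hμ (f j)).union_le ((hB (f j)).union c1) c2
    have h3 := (hμ (f j)).union_le (hB (f j)) c1
    have h4 := hsplitμ j _ ((hB 0).diff (hB (f j))) (hdiff _ _)
    have h5 := hsplitμ j _ hHc hHs
    have h6 := hBμn (f j)
    linarith
  · have hsub : ((B 0 ∪ H) \ G)ᶜ ⊆ ((B (f j))ᶜ ∪ ((B (f j) \ B 0) \ U j)) ∪ (G \ U j) := by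
      intro x hx
      have e1 := @hHsub x
      have e2 : x ∈ G → x ∉ U j ∩ B (f j) := fun h => Set.disjoint_left.1 hGdisj h
      simp only [Set.mem_union, Set.mem_sdiff, Set.mem_compl_iff, Set.mem_inter_iff] at hx e1 e2 ⊢
      tauto
    have c1 : IsClopen ((B (f j) \ B 0) \ U j) := ((hB _).diff (hB _)).diff (hU j)
    have c2 : IsClopen (G \ U j) := hGc.diff (hU j)
    have h1 := (hν (f j)).mono hA.compl (((hB _).compl.union c1).union c2) hsub
    have h2 := (hν (f j)).union_le ((hB (f j)).compl.union c1) c2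
    have h3 := (hν (f j)).union_le (hB (f j)).compl c1
    have h4 := hsplitν j _ ((hB (f j)).diff (hB 0)) (hdiff _ _)
    have h5 := hsplitν j _ hGc hGs
    have h6 := hBνn (f j)
    linarith

/-- Separation with a prescribed accuracy of an infinite subset of `L` together with a finite set
of indices. -/
lemma exists_infinite_separated (hS : ClopenSubseqComplete S) {μ ν : ℕ → Set S → ℝ}
    (hμ : ∀ n, IsClopenContent (μ n)) (hν : ∀ n, IsClopenContent (ν n)) {c : ℝ}
    (hμc : ∀ n, μ n Set.univ ≤ c) (hνc : ∀ n, ν n Set.univ ≤ c)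
    (hsep : ∀ m n, ClopenSeparated (μ m) (ν n)) {L : Set ℕ} (hL : L.Infinite) (F : Finset ℕ)
    {ε : ℝ} (hε : 0 < ε) :
    ∃ L' ⊆ L, L'.Infinite ∧ ∃ A, IsClopen A ∧
      ∀ n, (n ∈ L' ∨ n ∈ F) → μ n A < ε ∧ ν n Aᶜ < ε := by
  let g : ℕ → ℕ := Nat.nth (· ∈ L)
  have hg : StrictMono g := Nat.nth_strictMono hL
  have hgL : ∀ k, g k ∈ L := Nat.nth_mem_of_infinite hL
  have hμF := IsClopenContent.sum F hμ
  have hνF := IsClopenContent.sum F hν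
  have hle : ∀ {p : ℕ → Set S → ℝ}, (∀ n, p n Set.univ ≤ c) → ∀ n,
      p (g n) Set.univ + ∑ i ∈ F, p i Set.univ ≤ c + F.card * c := fun hp n =>
    add_le_add (hp _) ((Finset.sum_le_sum fun i _ => hp i).trans (by simp))
  obtain ⟨f, hf, A, hA, hfA⟩ := hS.exists_subsequence_separated
    (μ := fun n A => μ (g n) A + ∑ i ∈ F, μ i A) (ν := fun n A => ν (g n) A + ∑ i ∈ F, ν i A)
    (fun n => (hμ _).add hμF) (fun n => (hν _).add hνF) (hle hμc) (hle hνc)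
    (fun m n => ClopenSeparated.add_left (hμ _) hμF ((hν _).add hνF)
      (ClopenSeparated.add_left (hν _) hνF (hμ _) (hsep _ _).symm
        (ClopenSeparated.sum_left F hν (hμ _) fun j => (hsep _ j).symm)).symm
      (ClopenSeparated.add_left (hν _) hνF hμF
        (ClopenSeparated.sum_left F hμ (hν _) fun i => hsep i _).symm
        (ClopenSeparated.sum_sum F F hμ hν hsep).symm).symm) hε
  refine ⟨Set.range (g ∘ f), ?_, Set.infinite_range_of_injective (hg.comp hf).injective, A, hA,
    ?_⟩
  · rintro _ ⟨k, rfl⟩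
    exact hgL _
  · rintro n (⟨k, rfl⟩ | hn)
    · have h1 := hfA k
      have h2 := hμF.nonneg A hA
      have h3 := hνF.nonneg _ hA.compl
      simp only [Function.comp_apply] at h1 h2 h3 ⊢
      constructor <;> linarith
    · have h1 := hfA 0
      have h2 := IsClopenContent.single_le_sum hμ hn hA
      have h3 := IsClopenContent.single_le_sum hν hn hA.compl
      have h4 := (hμ (g (f 0))).nonneg A hA
      have h5 := (hν (g (f 0))).nonneg _ hA.compl
      constructor <;> linarith

end ClopenSubseqComplete


/-- Uniform separation: S a Haydon space, (μₙ), (νₙ) nonnegative monotone additive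
functions on the topology with μₙ(S) = νₙ(S) = 1, each pair μₘ, νₙ being 𝒰(S)-separated.
Then some infinite Λ ⊆ ℕ is such that for each ε > 0 a single clopen A ε-separates
μₘ and νₙ simultaneously for all m, n ∈ Λ. -/
theorem stmt12 {S : Type*} [TopologicalSpace S] [CompactSpace S] [T2Space S]
    [TotallyDisconnectedSpace S]
    (hSCP : ∀ U : ℕ → Set S, (∀ n, IsClopen (U n)) →
      Pairwise (Function.onFun Disjoint U) →
      ∃ M : Set ℕ, M.Infinite ∧ IsOpen (closure (⋃ m ∈ M, U m)))
    (μ ν : ℕ → Set S → ℝ)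
    (hμ_nonneg : ∀ n A, IsOpen A → 0 ≤ μ n A)
    (hμ_mono : ∀ n (A B : Set S), IsOpen A → IsOpen B → A ⊆ B → μ n A ≤ μ n B)
    (hμ_add : ∀ n (A B : Set S), IsOpen A → IsOpen B → Disjoint A B →
      μ n (A ∪ B) = μ n A + μ n B)
    (hμ_one : ∀ n, μ n Set.univ = 1)
    (hν_nonneg : ∀ n A, IsOpen A → 0 ≤ ν n A)
    (hν_mono : ∀ n (A B : Set S), IsOpen A → IsOpen B → A ⊆ B → ν n A ≤ ν n B)
    (hν_add : ∀ n (A B : Set S), IsOpen A → IsOpen B → Disjoint A B →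
      ν n (A ∪ B) = ν n A + ν n B)
    (hν_one : ∀ n, ν n Set.univ = 1)
    (hsep : ∀ m n, ∀ ε > (0 : ℝ), ∃ A : Set S, IsClopen A ∧
      μ m A < ε ∧ ν n Aᶜ < ε) :
    ∃ Λ : Set ℕ, Λ.Infinite ∧ ∀ ε > (0 : ℝ), ∃ A : Set S, IsClopen A ∧
      (∀ m ∈ Λ, μ m A < ε) ∧ ∀ n ∈ Λ, ν n Aᶜ < ε := by
  have hμ : ∀ n, IsClopenContent (μ n) := fun n =>
    ⟨fun A hA => hμ_nonneg n A hA.isOpen, fun A B hA hB => hμ_add n A B hA.isOpen hB.isOpen⟩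
  have hν : ∀ n, IsClopenContent (ν n) := fun n =>
    ⟨fun A hA => hν_nonneg n A hA.isOpen, fun A B hA hB => hν_add n A B hA.isOpen hB.isOpen⟩
  have hS : ClopenSubseqComplete S := hSCP
  have step : ∀ (k : ℕ) (P : {L : Set ℕ // L.Infinite} × Finset ℕ),
      ∃ (n : ℕ) (A : Set S) (L' : {L : Set ℕ // L.Infinite}), n ∈ P.1.1 ∧ L'.1 ⊆ P.1.1 ∧
        (∀ i ∈ L'.1, n < i) ∧ IsClopen A ∧
        ∀ i, (i = n ∨ i ∈ L'.1 ∨ i ∈ P.2) →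
          μ i A < 1 / ((k : ℝ) + 1) ∧ ν i Aᶜ < 1 / ((k : ℝ) + 1) := by
    rintro k ⟨⟨L, hL⟩, F⟩
    obtain ⟨L', hL', hinf, A, hA, h⟩ := hS.exists_infinite_separated hμ hν
      (fun n => (hμ_one n).le) (fun n => (hν_one n).le) hsep hL F
      (show 0 < 1 / ((k : ℝ) + 1) by positivity)
    obtain ⟨n, hn⟩ := hinf.nonempty
    refine ⟨n, A, ⟨L' \ Set.Iic n, hinf.sdiff (Set.finite_Iic n)⟩, hL' hn,
      fun i hi => hL' hi.1, fun i hi => not_le.1 hi.2, hA, ?_⟩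
    rintro i (rfl | hi | hi)
    · exact h _ (.inl hn)
    · exact h i (.inl hi.1)
    · exact h i (.inr hi)
  choose n A L' hn hL' hlt hA hsmall using step
  let P : ℕ → {L : Set ℕ // L.Infinite} × Finset ℕ := fun k => Nat.rec
    (⟨Set.univ, Set.infinite_univ⟩, ∅) (fun k P => (L' k P, insert (n k P) P.2)) k
  have hP1 : ∀ k, (P (k + 1)).1 = L' k (P k) := fun k => rfl
  have hP2 : ∀ k, (P (k + 1)).2 = insert (n k (P k)) (P k).2 := fun k => rfl
  have hanti : Antitone fun k => (P k).1.1 := antitone_nat_of_succ_le fun k => hL' k (P k)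
  have hmono : Monotone fun k => (P k).2 := monotone_nat_of_le_succ fun k => by
    rw [hP2]
    exact Finset.subset_insert _ _
  have hstrict : StrictMono fun k => n k (P k) :=
    strictMono_nat_of_lt_succ fun k => hlt k (P k) _ (hn (k + 1) (P (k + 1)))
  refine ⟨Set.range fun k => n k (P k), Set.infinite_range_of_injective hstrict.injective, ?_⟩
  intro ε hε
  obtain ⟨k, hk⟩ := exists_nat_one_div_lt hε
  have key : ∀ j, μ (n j (P j)) (A k (P k)) < ε ∧ ν (n j (P j)) (A k (P k))ᶜ < ε := by
    intro j
    have hmem : n j (P j) = n k (P k) ∨ n j (P j) ∈ (L' k (P k)).1 ∨ n j (P j) ∈ (P k).2 := by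
      rcases lt_trichotomy j k with h | rfl | h
      · refine .inr (.inr (hmono (Nat.succ_le_of_lt h) ?_))
        simp only [Nat.succ_eq_add_one, hP2]
        exact Finset.mem_insert_self _ _
      · exact .inl rfl
      · exact .inr (.inl (hanti (Nat.succ_le_of_lt h) (hn j (P j))))
    exact ⟨(hsmall k (P k) _ hmem).1.trans hk, (hsmall k (P k) _ hmem).2.trans hk⟩
  refine ⟨A k (P k), hA k (P k), ?_, ?_⟩
  · rintro _ ⟨j, rfl⟩
    exact (key j).1
  · rintro _ ⟨j, rfl⟩
    exact (key j).2
end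

section
/- If S is a Haydon space, then for any two sequences (μₙ), (νₙ) of Radon probability measures on S with μₘ ⊥ νₙ for all m, n (mutually singular), and any ε > 0, there exist an infinite set Λ ⊆ ℕ and disjoint compact sets A, B ⊆ S such that μₙ(A) > 1−ε and νₙ(B) > 1−ε for all n ∈ Λ. -/
open MeasureTheory
open scoped ENNReal

section ClopenApproximation

variable {S : Type*} [TopologicalSpace S] [CompactSpace S] [T2Space S]
  [TotallyDisconnectedSpace S] [MeasurableSpace S] [BorelSpace S]

/-- Measurable sets can be approximated by clopen sets in measure. -/
lemma exists_isClopen_measure_diff_lt (lam : Measure S) [IsFiniteMeasure lam]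
    [lam.InnerRegular] {E : Set S} (hE : MeasurableSet E) {η : ℝ≥0∞} (hη : η ≠ 0) :
    ∃ C, IsClopen C ∧ lam (E \ C) < η ∧ lam (C \ E) < η := by
  obtain ⟨K, hKE, hK, hKη⟩ := hE.exists_isCompact_sdiff_lt (measure_ne_top lam E) hη
  obtain ⟨U, hEU, hU, -, hUη⟩ := hE.exists_isOpen_sdiff_lt (measure_ne_top lam E) hη
  obtain ⟨C, hC, hKC, hCU⟩ := exists_clopen_of_closed_subset_open hK.isClosed hU (hKE.trans hEU)
  exact ⟨C, hC, (measure_mono (Set.sdiff_subset_sdiff_right hKC)).trans_lt hKη,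
    (measure_mono (Set.sdiff_subset_sdiff_left hCU)).trans_lt hUη⟩

/-- A set which is small for `lam` and large for `ρ` can be replaced by a clopen one. -/
lemma exists_isClopen_measure_lt_lt_measure (lam ρ : Measure S) [IsFiniteMeasure lam]
    [lam.InnerRegular] [ρ.InnerRegular] {P : Set S} {η r : ℝ≥0∞}
    (hPη : lam P < η) (hrP : r < ρ P) :
    ∃ C, IsClopen C ∧ lam C < η ∧ r < ρ C := by
  obtain ⟨K, hKP, hK, hrK⟩ := (measurableSet_toMeasurable lam P).exists_lt_isCompact
    (hrP.trans_le (measure_mono (subset_toMeasurable lam P)))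
  have hKη : lam K < η :=
    (measure_mono hKP).trans_lt ((measure_toMeasurable (μ := lam) P).trans_lt hPη)
  obtain ⟨U, hKU, hU, hUη⟩ := K.exists_isOpen_lt_of_lt η hKη
  obtain ⟨C, hC, hKC, hCU⟩ := exists_clopen_of_closed_subset_open hK.isClosed hU hKU
  exact ⟨C, hC, (measure_mono hCU).trans_lt hUη, hrK.trans_le (measure_mono hKC)⟩

end ClopenApproximation

section Splitting

variable {S : Type*} [TopologicalSpace S] [MeasurableSpace S]

/-- A subsequence splitting lemma along an ultrafilter: off clopen sets that are small for `lam`,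
the measures `ρ n` are uniformly absolutely continuous up to an error `δ`. -/
lemma exists_eventually_isClopen_measure_diff_le [CompactSpace S] [T2Space S]
    [TotallyDisconnectedSpace S] [BorelSpace S] (𝒰 : Ultrafilter ℕ)
    (lam : Measure S) [IsFiniteMeasure lam] [lam.InnerRegular]
    (ρ : ℕ → Measure S) [∀ n, (ρ n).InnerRegular] {b : ℝ≥0∞} (hb : b ≠ ∞)
    (hρ : ∀ n, ρ n Set.univ ≤ b) {δ : ℝ≥0∞} (hδ : δ ≠ 0) :
    ∃ η₀ ≠ 0, ∀ η ≠ 0, ∀ᶠ n in (𝒰 : Filter ℕ), ∃ R, IsClopen R ∧ lam R < η ∧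
      ∀ H, lam H < η₀ → ρ n (H \ R) ≤ δ := by
  let Q : ℕ → Prop := fun k ↦ ∃ η : ℝ≥0∞, η ≠ 0 ∧
    ∀ᶠ n in (𝒰 : Filter ℕ), ∀ F, lam F < η → ρ n F ≤ k * δ
  have hQ : ∃ k, Q k := by
    obtain ⟨k, hk⟩ := ENNReal.exists_nat_mul_gt hδ hb
    exact ⟨k, 1, one_ne_zero, .of_forall fun n F _ ↦
      ((measure_mono (Set.subset_univ F)).trans (hρ n)).trans hk.le⟩
  classical
  obtain ⟨η₁, hη₁, hQη⟩ := Nat.find_spec hQ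
  rcases hk : Nat.find hQ with _ | k
  · refine ⟨η₁, hη₁, fun η hη ↦ hQη.mono fun n hn ↦
      ⟨∅, isClopen_empty, by simpa using pos_iff_ne_zero.2 hη, fun H hH ↦ ?_⟩⟩
    have := hn H hH
    simp only [hk, Nat.cast_zero, zero_mul, nonpos_iff_eq_zero] at this
    simp [this]
  · have hmin : ¬ Q k := Nat.find_min hQ (by omega)
    refine ⟨η₁ / 2, by simpa using hη₁, fun η hη ↦ ?_⟩
    have hlarge : ∀ᶠ n in (𝒰 : Filter ℕ),
        ¬ ∀ F, lam F < min η (η₁ / 2) → ρ n F ≤ k * δ :=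
      Ultrafilter.eventually_not.2 fun h ↦ hmin ⟨min η (η₁ / 2), by
        rcases min_choice η (η₁ / 2) with h' | h' <;> simp [h', hη, hη₁], h⟩
    filter_upwards [hQη, hlarge] with n hn hn'
    push Not at hn'
    obtain ⟨F, hF, hkF⟩ := hn'
    obtain ⟨R, hR, hRη, hkR⟩ := exists_isClopen_measure_lt_lt_measure lam (ρ n) hF hkF
    refine ⟨R, hR, hRη.trans_le (min_le_left _ _), fun H hH ↦ ?_⟩
    have hunion : lam (R ∪ H) < η₁ := by
      calc lam (R ∪ H) ≤ lam R + lam H := measure_union_le _ _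
        _ < η₁ / 2 + η₁ / 2 := ENNReal.add_lt_add (hRη.trans_le (min_le_right _ _)) hH
        _ = η₁ := ENNReal.add_halves _
    have hle := hn _ hunion
    rw [hk, Nat.cast_add_one, add_mul, one_mul, ← Set.union_sdiff_self,
      measure_union' Set.disjoint_sdiff_right hR.isOpen.measurableSet] at hle
    exact (ENNReal.add_le_add_iff_left hkF.ne_top).1 ((add_le_add_left hkR.le _).trans hle)

variable {lam : Measure S} {ρ : ℕ → Measure S} {η₀ δ : ℝ≥0∞}

/-- The clopen sets in the splitting can be chosen asymptotically negligible along the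
ultrafilter. -/
lemma eventually_exists_isClopen_eventually_measure_le [BorelSpace S] (𝒰 : Ultrafilter ℕ)
    {b : ℝ≥0∞} (hb : b ≠ ∞) (hρ : ∀ n, ρ n Set.univ ≤ b) (hδ : δ ≠ 0)
    (hac : ∀ n, ∀ θ ≠ 0, ∃ η ≠ 0, ∀ F, lam F < η → ρ n F ≤ θ)
    (hsplit : ∀ η ≠ 0, ∀ᶠ n in (𝒰 : Filter ℕ), ∃ R, IsClopen R ∧ lam R < η ∧
      ∀ H, lam H < η₀ → ρ n (H \ R) ≤ δ) {θ : ℝ≥0∞} (hθ : θ ≠ 0) :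
    ∀ᶠ n in (𝒰 : Filter ℕ), ∃ R, IsClopen R ∧ (∀ᶠ m in (𝒰 : Filter ℕ), ρ m R ≤ θ) ∧
      ∀ H, lam H < η₀ → ρ n (H \ R) ≤ 2 * δ := by
  by_contra hbad
  rw [← Ultrafilter.eventually_not] at hbad
  obtain ⟨N, hN⟩ := ENNReal.exists_nat_mul_gt hθ hb
  have hδN : δ / N ≠ 0 := ENNReal.div_ne_zero.2 ⟨hδ, ENNReal.natCast_ne_top N⟩
  choose w hw hwρ using fun n ↦ hac n (δ / N) hδN
  obtain ⟨f, hf, hfr⟩ := exists_seq_of_forall_finset_exists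
    (fun x : ℕ × Set S ↦ (¬ ∃ R, IsClopen R ∧ (∀ᶠ m in (𝒰 : Filter ℕ), ρ m R ≤ θ) ∧
      ∀ H, lam H < η₀ → ρ x.1 (H \ R) ≤ 2 * δ) ∧ IsClopen x.2 ∧
      ∀ H, lam H < η₀ → ρ x.1 (H \ x.2) ≤ δ)
    (fun x y ↦ ρ x.1 y.2 ≤ δ / N) (by
      intro s _
      have hinf : s.inf (fun x ↦ w x.1) ≠ 0 := pos_iff_ne_zero.1 <|
        (Finset.lt_inf_iff ENNReal.zero_lt_top).2 fun x _ ↦ pos_iff_ne_zero.2 (hw x.1)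
      obtain ⟨n, hn, R, hR, hRs, hnR⟩ := (hbad.and (hsplit _ hinf)).exists
      exact ⟨(n, R), ⟨hn, hR, hnR⟩, fun x hx ↦
        hwρ x.1 R (hRs.trans_le (Finset.inf_le (f := fun x : ℕ × Set S ↦ w x.1) hx))⟩)
  let T : ℕ → Set S := fun j ↦ (f j).2 \ ⋃ l ∈ Finset.Ioo j N, (f l).2
  have hT : ∀ j, IsClopen (T j) := fun j ↦
    (hf j).2.1.diff (isClopen_biUnion_finset fun l _ ↦ (hf l).2.1)
  have hTρ : ∀ j H, lam H < η₀ → ρ (f j).1 (H \ T j) ≤ 2 * δ := by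
    intro j H hH
    have hsub : H \ T j ⊆ (H \ (f j).2) ∪ ⋃ l ∈ Finset.Ioo j N, (f l).2 := by
      intro x hx
      by_cases h : x ∈ (f j).2
      · right
        by_contra h'
        exact hx.2 ⟨h, h'⟩
      · exact .inl ⟨hx.1, h⟩
    calc ρ (f j).1 (H \ T j)
        ≤ ρ (f j).1 (H \ (f j).2) + ∑ l ∈ Finset.Ioo j N, ρ (f j).1 (f l).2 :=
          (measure_mono hsub).trans <| (measure_union_le _ _).trans <|
            add_le_add_right (measure_biUnion_finset_le _ _) _
      _ ≤ δ + ∑ l ∈ Finset.Ioo j N, δ / N :=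
          add_le_add ((hf j).2.2 H hH) (Finset.sum_le_sum fun l hl ↦
            hfr j l (Finset.mem_Ioo.1 hl).1)
      _ ≤ δ + N * (δ / N) := by
          rw [Finset.sum_const, nsmul_eq_mul]
          gcongr
          rw [Nat.card_Ioo]
          omega
      _ ≤ 2 * δ := by
          rw [two_mul]
          gcongr
          exact ENNReal.mul_div_le
  have hlarge : ∀ᶠ m in (𝒰 : Filter ℕ), ∀ j ∈ Finset.range N, ¬ ρ m (T j) ≤ θ :=
    (Filter.eventually_all_finset _).2 fun j _ ↦ Ultrafilter.eventually_not.2 fun h ↦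
      (hf j).1 ⟨T j, hT j, h, hTρ j⟩
  obtain ⟨m, hm⟩ := hlarge.exists
  have hlt : ∀ i j, i < j → j < N → Disjoint (T i) (T j) := fun i j hij hj ↦
    Set.disjoint_left.2 fun x hxi hxj ↦
      hxi.2 (Set.mem_biUnion (Finset.mem_coe.2 (Finset.mem_Ioo.2 ⟨hij, hj⟩)) hxj.1)
  have hdisj : Set.Pairwise (Finset.range N : Set ℕ) (Function.onFun (AEDisjoint (ρ m)) T) := by
    intro i hi j hj hij
    simp only [Finset.coe_range, Set.mem_Iio] at hi hj
    rcases hij.lt_or_gt with h | h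
    · exact (hlt i j h hj).aedisjoint
    · exact (hlt j i h hi).symm.aedisjoint
  refine hN.not_ge ?_
  calc N * θ = ∑ _j ∈ Finset.range N, θ := by simp
    _ ≤ ∑ j ∈ Finset.range N, ρ m (T j) := Finset.sum_le_sum fun j hj ↦ (not_le.1 (hm j hj)).le
    _ ≤ ρ m Set.univ :=
        sum_measure_le_measure_univ (fun j _ ↦ (hT j).isOpen.measurableSet.nullMeasurableSet) hdisj
    _ ≤ b := hρ m

/-- Pairwise disjoint clopen sets absorbing, along a subsequence, the part of the measures which is
not uniformly absolutely continuous. -/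
lemma exists_strictMono_pairwise_disjoint_isClopen (hδ : δ ≠ 0)
    (h : ∀ θ ≠ 0, ∀ᶠ n in (Filter.hyperfilter ℕ : Filter ℕ), ∃ R, IsClopen R ∧
      (∀ᶠ m in (Filter.hyperfilter ℕ : Filter ℕ), ρ m R ≤ θ) ∧
      ∀ H, lam H < η₀ → ρ n (H \ R) ≤ 2 * δ) :
    ∃ (φ : ℕ → ℕ) (R : ℕ → Set S), StrictMono φ ∧ (∀ j, IsClopen (R j)) ∧
      Pairwise (Function.onFun Disjoint R) ∧
      ∀ j H, lam H < η₀ → ρ (φ j) (H \ R j) ≤ 3 * δ := by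
  obtain ⟨w, hw, hwδ⟩ := ENNReal.exists_pos_sum_of_countable hδ ℕ
  have hgt : ∀ a : ℕ, ∀ᶠ n in (Filter.hyperfilter ℕ : Filter ℕ), a < n := fun a ↦
    (Filter.eventually_gt_atTop a).filter_mono Nat.hyperfilter_le_atTop
  obtain ⟨f, hf, hfr⟩ := exists_seq_of_forall_finset_exists
    (fun x : ℕ × ℕ × Set S ↦ IsClopen x.2.2 ∧
      (∀ᶠ m in (Filter.hyperfilter ℕ : Filter ℕ), ρ m x.2.2 ≤ w x.2.1) ∧
      ∀ H, lam H < η₀ → ρ x.1 (H \ x.2.2) ≤ 2 * δ)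
    (fun x y ↦ x.1 < y.1 ∧ x.2.1 < y.2.1 ∧ ρ y.1 x.2.2 ≤ w x.2.1) (by
      intro s hs
      let k := s.sup (fun x ↦ x.2.1) + 1
      have hsmall : ∀ᶠ n in (Filter.hyperfilter ℕ : Filter ℕ),
          ∀ x ∈ s, x.1 < n ∧ ρ n x.2.2 ≤ w x.2.1 :=
        (Filter.eventually_all_finset _).2 fun x hx ↦ (hgt x.1).and (hs x hx).2.1
      obtain ⟨n, hn, R, hR⟩ :=
        (hsmall.and (h (w k) (by simpa using (hw k).ne'))).exists
      exact ⟨(n, k, R), hR, fun x hx ↦ ⟨(hn x hx).1,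
        Nat.lt_succ_of_le (Finset.le_sup (f := fun x : ℕ × ℕ × Set S ↦ x.2.1) hx),
        (hn x hx).2⟩⟩)
  have hk : StrictMono fun j ↦ (f j).2.1 := fun i j hij ↦ (hfr i j hij).2.1
  let T : ℕ → Set S := fun j ↦ (f j).2.2 \ ⋃ i ∈ Finset.range j, (f i).2.2
  have hlt : ∀ i j, i < j → Disjoint (T i) (T j) := fun i j hij ↦
    Set.disjoint_left.2 fun x hxi hxj ↦
      hxj.2 (Set.mem_biUnion (Finset.mem_coe.2 (Finset.mem_range.2 hij)) hxi.1)
  refine ⟨fun j ↦ (f j).1, T, fun i j hij ↦ (hfr i j hij).1,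
    fun j ↦ (hf j).1.diff (isClopen_biUnion_finset fun i _ ↦ (hf i).1), ?_, ?_⟩
  · intro i j hij
    rcases hij.lt_or_gt with h | h
    · exact hlt i j h
    · exact (hlt j i h).symm
  · intro j H hH
    have hsub : H \ T j ⊆ (H \ (f j).2.2) ∪ ⋃ i ∈ Finset.range j, (f i).2.2 := by
      intro x hx
      by_cases h : x ∈ (f j).2.2
      · right
        by_contra h'
        exact hx.2 ⟨h, h'⟩
      · exact .inl ⟨hx.1, h⟩
    calc ρ (f j).1 (H \ T j)
        ≤ ρ (f j).1 (H \ (f j).2.2) + ∑ i ∈ Finset.range j, ρ (f j).1 (f i).2.2 :=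
          (measure_mono hsub).trans <| (measure_union_le _ _).trans <|
            add_le_add_right (measure_biUnion_finset_le _ _) _
      _ ≤ 2 * δ + ∑ i ∈ Finset.range j, (w (f i).2.1 : ℝ≥0∞) :=
          add_le_add ((hf j).2.2 H hH) (Finset.sum_le_sum fun i hi ↦
            (hfr i j (Finset.mem_range.1 hi)).2.2)
      _ ≤ 2 * δ + δ := by
          gcongr
          exact (ENNReal.sum_le_tsum _).trans <|
            (ENNReal.tsum_comp_le_tsum_of_injective hk.injective fun k ↦ (w k : ℝ≥0∞)).trans hwδ.le
      _ = 3 * δ := by ring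

end Splitting

/-- If disjoint open sets have open closures, these closures are disjoint. -/
lemma Disjoint.closure_closure_of_isOpen {S : Type*} [TopologicalSpace S] {U V : Set S}
    (h : Disjoint U V) (hV : IsOpen V) (hU' : IsOpen (closure U)) :
    Disjoint (closure U) (closure V) :=
  (h.closure_left hV).closure_right hU'

/-- In a Haydon space, the clopen closure of the union of a subfamily may be taken of small
measure. -/
lemma exists_infinite_subset_isOpen_closure_measure_lt {S : Type*} [TopologicalSpace S]
    [MeasurableSpace S] [BorelSpace S]
    (hSCP : ∀ U : ℕ → Set S, (∀ n, IsClopen (U n)) →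
      Pairwise (Function.onFun Disjoint U) →
      ∃ M : Set ℕ, M.Infinite ∧ IsOpen (closure (⋃ m ∈ M, U m)))
    (lam : Measure S) [IsFiniteMeasure lam] {η : ℝ≥0∞} (hη : η ≠ 0)
    {R : ℕ → Set S} (hR : ∀ n, IsClopen (R n)) (hdisj : Pairwise (Function.onFun Disjoint R))
    {M : Set ℕ} (hM : M.Infinite) :
    ∃ M' ⊆ M, M'.Infinite ∧ IsOpen (closure (⋃ m ∈ M', R m)) ∧
      lam (closure (⋃ m ∈ M', R m)) < η := by
  let e := hM.natEmbedding
  let g : ℕ → ℕ → ℕ := fun i j ↦ e (Nat.pair i j)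
  have hg : ∀ {i j i' j'}, g i j = g i' j' → i = i' ∧ j = j' := fun h ↦
    Nat.pair_eq_pair.1 (e.injective (Subtype.ext h))
  choose L hL hLopen using fun i ↦ hSCP (fun j ↦ R (g i j)) (fun j ↦ hR _)
    fun j j' hj ↦ hdisj fun h ↦ hj (hg h).2
  let X : ℕ → Set S := fun i ↦ closure (⋃ j ∈ L i, R (g i j))
  have hX : Pairwise (Function.onFun Disjoint X) := by
    intro i i' hi
    refine Disjoint.closure_closure_of_isOpen ?_
      (isOpen_biUnion fun j _ ↦ (hR _).isOpen) (hLopen i)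
    simp only [Set.disjoint_iUnion_left, Set.disjoint_iUnion_right]
    exact fun j _ j' _ ↦ hdisj fun h ↦ hi (hg h).1
  obtain ⟨i, hi⟩ : ∃ i, lam (X i) < η := by
    by_contra! h
    have hfin : {i | η ≤ lam (X i)}.Finite :=
      Measure.finite_const_le_meas_of_disjoint_iUnion lam (pos_iff_ne_zero.2 hη)
        (fun i ↦ isClosed_closure.measurableSet) hX (measure_ne_top _ _)
    exact Set.infinite_univ (hfin.subset fun i _ ↦ h i)
  refine ⟨g i '' L i, ?_, (hL i).image fun j _ j' _ h ↦ (hg h).2, ?_, ?_⟩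
  · rintro _ ⟨j, -, rfl⟩
    exact (e (Nat.pair i j)).2
  · rw [Set.biUnion_image]
    exact hLopen i
  · rw [Set.biUnion_image]
    exact hi

/-- Countably many probability measures are dominated by a finite inner regular measure. -/
lemma exists_innerRegular_dominating {S : Type*} [TopologicalSpace S] [MeasurableSpace S]
    (ρ : ℕ → Measure S) [∀ n, (ρ n).InnerRegular] {b : ℝ≥0∞} (hb : b ≠ ∞)
    (hρ : ∀ n, ρ n Set.univ ≤ b) :
    ∃ lam : Measure S, IsFiniteMeasure lam ∧ lam.InnerRegular ∧
      ∀ n, ∀ θ ≠ 0, ∃ η ≠ 0, ∀ F, lam F < η → ρ n F ≤ θ := by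
  obtain ⟨w, hw, hwsum⟩ := ENNReal.exists_pos_sum_of_countable one_ne_zero ℕ
  refine ⟨Measure.sum fun n ↦ (w n : ℝ≥0∞) • ρ n, ⟨?_⟩, inferInstance, fun n θ hθ ↦
    ⟨w n * θ, mul_ne_zero (by simpa using (hw n).ne') hθ, fun F hF ↦ ?_⟩⟩
  · rw [Measure.sum_apply _ MeasurableSet.univ]
    calc ∑' n, ((w n : ℝ≥0∞) • ρ n) Set.univ ≤ ∑' n, (w n : ℝ≥0∞) * b :=
          ENNReal.tsum_le_tsum fun n ↦ by
            rw [Measure.smul_apply, smul_eq_mul]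
            gcongr
            exact hρ n
      _ = (∑' n, (w n : ℝ≥0∞)) * b := ENNReal.tsum_mul_right
      _ < ∞ := ENNReal.mul_lt_top (hwsum.trans ENNReal.one_lt_top) hb.lt_top
  · have hle : w n * ρ n F ≤ w n * θ :=
      (Measure.le_iff'.1 (Measure.le_sum (fun n ↦ (w n : ℝ≥0∞) • ρ n) n) F).trans hF.le
    exact (ENNReal.mul_le_mul_iff_right (by simpa using (hw n).ne') ENNReal.coe_ne_top).1 hle


/-- On a Haydon space, for two sequences of pairwise mutually singular Radon probability
measures one can find an infinite Λ ⊆ ℕ and disjoint compact sets A, B almost carrying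
all μₙ resp. νₙ, n ∈ Λ, simultaneously. -/
theorem stmt13 {S : Type*} [TopologicalSpace S] [CompactSpace S] [T2Space S]
    [TotallyDisconnectedSpace S]
    [MeasurableSpace S] [BorelSpace S]
    (hSCP : ∀ U : ℕ → Set S, (∀ n, IsClopen (U n)) →
      Pairwise (Function.onFun Disjoint U) →
      ∃ M : Set ℕ, M.Infinite ∧ IsOpen (closure (⋃ m ∈ M, U m)))
    (μ ν : ℕ → Measure S)
    (hμ_prob : ∀ n, IsProbabilityMeasure (μ n))
    (hν_prob : ∀ n, IsProbabilityMeasure (ν n))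
    (hμ_reg : ∀ n, (μ n).InnerRegular)
    (hν_reg : ∀ n, (ν n).InnerRegular)
    (hsing : ∀ m n, (μ m).MutuallySingular (ν n))
    (ε : ℝ≥0∞) (hε : 0 < ε) :
    ∃ Λ : Set ℕ, Λ.Infinite ∧ ∃ A B : Set S, IsCompact A ∧ IsCompact B ∧
      Disjoint A B ∧ ∀ n ∈ Λ, 1 - ε < μ n A ∧ 1 - ε < ν n B := by
  obtain ⟨δ, hδ, hδε⟩ : ∃ δ : ℝ≥0∞, δ ≠ 0 ∧ 7 * δ < min ε 1 := by
    obtain ⟨δ, hδ0, hδ⟩ := exists_between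
      (ENNReal.div_pos (lt_min hε one_pos).ne' (ENNReal.ofNat_ne_top (n := 7)))
    exact ⟨δ, hδ0.ne', by simpa only [mul_comm] using ENNReal.mul_lt_of_lt_div hδ⟩
  have hcompl : ∀ (m : Measure S) [IsProbabilityMeasure m] (A : Set S), MeasurableSet A →
      m Aᶜ ≤ 7 * δ → 1 - ε < m A := by
    intro m _ A hA h
    refine (tsub_le_tsub_left (min_le_left ε 1) 1).trans_lt <|
      ENNReal.sub_lt_of_lt_add (min_le_right ε 1) ?_
    refine (prob_add_prob_compl (μ := m) hA).symm.trans_lt ?_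
    exact ENNReal.add_lt_add_left (measure_ne_top m A) (h.trans_lt hδε)
  obtain ⟨E, hE, hμE, hνE⟩ : (Measure.sum μ).MutuallySingular (Measure.sum ν) :=
    Measure.MutuallySingular.sum_left.2 fun m ↦
      Measure.MutuallySingular.sum_right.2 fun n ↦ hsing m n
  replace hμE : ∀ n, μ n E = 0 := (Measure.sum_apply_eq_zero' hE).1 hμE
  replace hνE : ∀ n, ν n Eᶜ = 0 := (Measure.sum_apply_eq_zero' hE.compl).1 hνE
  let ρ : ℕ → Measure S := fun n ↦ μ n + ν n
  have hμρ : ∀ n F, μ n F ≤ ρ n F := fun n F ↦ by simp [ρ]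
  have hνρ : ∀ n F, ν n F ≤ ρ n F := fun n F ↦ by simp [ρ]
  have hρreg : ∀ n, (ρ n).InnerRegular := fun n ↦ inferInstance
  have hρ2 : ∀ n, ρ n Set.univ ≤ 2 := fun n ↦ by simp [ρ, one_add_one_eq_two]
  obtain ⟨lam, _, _, hac⟩ := exists_innerRegular_dominating ρ ENNReal.ofNat_ne_top hρ2
  obtain ⟨η₀, hη₀, hsplit⟩ := exists_eventually_isClopen_measure_diff_le
    (Filter.hyperfilter ℕ) lam ρ ENNReal.ofNat_ne_top hρ2 hδ
  obtain ⟨φ, R, hφ, hR, hRdisj, hRρ⟩ := exists_strictMono_pairwise_disjoint_isClopen hδ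
    fun θ hθ ↦ eventually_exists_isClopen_eventually_measure_le
      (Filter.hyperfilter ℕ) ENNReal.ofNat_ne_top hρ2 hδ hac hsplit hθ
  -- `C` separates the uniformly absolutely continuous parts, `G j ∩ R j` the remaining ones.
  obtain ⟨C, hC, hEC, hCE⟩ := exists_isClopen_measure_diff_lt lam hE hη₀
  have hG : ∀ j, ∃ G, IsClopen G ∧ ρ (φ j) (E \ G) ≤ δ ∧ ρ (φ j) (G \ E) ≤ δ := by
    intro j
    obtain ⟨η, hη, hηδ⟩ := hac (φ j) δ hδ
    obtain ⟨G, hG, hEG, hGE⟩ := exists_isClopen_measure_diff_lt lam hE hη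
    exact ⟨G, hG, hηδ _ hEG, hηδ _ hGE⟩
  choose G hG hEG hGE using hG
  obtain ⟨M, hM, hMopen⟩ := hSCP (fun j ↦ G j ∩ R j) (fun j ↦ (hG j).inter (hR j))
    fun i j hij ↦ (hRdisj hij).mono Set.inter_subset_right Set.inter_subset_right
  obtain ⟨M', hM'M, hM', hXopen, hXη⟩ :=
    exists_infinite_subset_isOpen_closure_measure_lt hSCP lam hη₀ hR hRdisj hM
  set V := closure (⋃ m ∈ M, G m ∩ R m)
  set X := closure (⋃ m ∈ M', R m)
  have hV : IsClopen V := ⟨isClosed_closure, hMopen⟩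
  have hX : IsClopen X := ⟨isClosed_closure, hXopen⟩
  have hRX : ∀ j ∈ M', R j ⊆ X := fun j hj ↦
    (Set.subset_biUnion_of_mem (u := R) hj).trans subset_closure
  have hGV : ∀ j ∈ M, G j ∩ R j ⊆ V := fun j hj ↦
    (Set.subset_biUnion_of_mem (u := fun m ↦ G m ∩ R m) hj).trans subset_closure
  have hVR : ∀ j, V ∩ R j ⊆ G j := by
    rintro j x ⟨hxV, hxR⟩
    have hsub : (⋃ m ∈ M, G m ∩ R m) ⊆ G j ∪ (R j)ᶜ := by
      refine Set.iUnion₂_subset fun m _ y hy ↦ ?_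
      rcases eq_or_ne m j with rfl | hmj
      · exact .inl hy.1
      · exact .inr (Set.disjoint_left.1 (hRdisj hmj) hy.2)
    have hcl : IsClosed (G j ∪ (R j)ᶜ) := (hG j).isClosed.union (hR j).compl.isClosed
    exact (closure_minimal hsub hcl hxV).resolve_right fun h ↦ h hxR
  set B := (C \ X) ∪ (V ∩ X)
  have hB : IsClopen B := (hC.diff hX).union (hV.inter hX)
  have hμB : ∀ j ∈ M', μ (φ j) B ≤ 7 * δ := by
    intro j hj
    have hsub : B ⊆ E ∪ ((C \ E) \ R j) ∪ (X \ R j) ∪ (G j \ E) := by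
      rintro x (⟨hxC, hxX⟩ | ⟨hxV, hxX⟩) <;> by_cases hxE : x ∈ E
      · exact .inl (.inl (.inl hxE))
      · exact .inl (.inl (.inr ⟨⟨hxC, hxE⟩, fun h ↦ hxX (hRX j hj h)⟩))
      · exact .inl (.inl (.inl hxE))
      · by_cases hxR : x ∈ R j
        · exact .inr ⟨hVR j ⟨hxV, hxR⟩, hxE⟩
        · exact .inl (.inr ⟨hxX, hxR⟩)
    calc μ (φ j) B
        ≤ μ (φ j) E + μ (φ j) ((C \ E) \ R j) + μ (φ j) (X \ R j) + μ (φ j) (G j \ E) := by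
          refine (measure_mono hsub).trans <| (measure_union_le _ _).trans ?_
          gcongr
          refine (measure_union_le _ _).trans ?_
          gcongr
          exact measure_union_le _ _
      _ ≤ 0 + 3 * δ + 3 * δ + δ := by
          gcongr
          · exact (hμE _).le
          · exact (hμρ _ _).trans (hRρ j _ hCE)
          · exact (hμρ _ _).trans (hRρ j _ hXη)
          · exact (hμρ _ _).trans (hGE j)
      _ = 7 * δ := by ring
  have hνB : ∀ j ∈ M', ν (φ j) Bᶜ ≤ 7 * δ := by
    intro j hj
    have hsub : Bᶜ ⊆ Eᶜ ∪ ((E \ C) \ R j) ∪ (X \ R j) ∪ (E \ G j) := by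
      intro x hx
      by_cases hxE : x ∈ E
      · by_cases hxR : x ∈ R j
        · exact .inr ⟨hxE, fun hxG ↦ hx (.inr ⟨hGV j (hM'M hj) ⟨hxG, hxR⟩, hRX j hj hxR⟩)⟩
        · by_cases hxX : x ∈ X
          · exact .inl (.inr ⟨hxX, hxR⟩)
          · exact .inl (.inl (.inr ⟨⟨hxE, fun hxC ↦ hx (.inl ⟨hxC, hxX⟩)⟩, hxR⟩))
      · exact .inl (.inl (.inl hxE))
    calc ν (φ j) Bᶜ
        ≤ ν (φ j) Eᶜ + ν (φ j) ((E \ C) \ R j) + ν (φ j) (X \ R j) + ν (φ j) (E \ G j) := by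
          refine (measure_mono hsub).trans <| (measure_union_le _ _).trans ?_
          gcongr
          refine (measure_union_le _ _).trans ?_
          gcongr
          exact measure_union_le _ _
      _ ≤ 0 + 3 * δ + 3 * δ + δ := by
          gcongr
          · exact (hνE _).le
          · exact (hνρ _ _).trans (hRρ j _ hEC)
          · exact (hνρ _ _).trans (hRρ j _ hXη)
          · exact (hνρ _ _).trans (hEG j)
      _ = 7 * δ := by ring
  refine ⟨φ '' M', hM'.image hφ.injective.injOn, Bᶜ, B, hB.compl.isClosed.isCompact,
    hB.isClosed.isCompact, disjoint_compl_left, ?_⟩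
  rintro _ ⟨j, hj, rfl⟩
  exact ⟨hcompl _ _ hB.compl.isOpen.measurableSet (by simpa using hμB j hj),
    hcompl _ _ hB.isOpen.measurableSet (hνB j hj)⟩
end
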